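/- arXiv:1910.09005 — 2 statements merged into one kernel-verified Lean document; each statement's English description precedes it below -/
import Mathlib

section
/- Let v be a node of a finite rooted tree with nonnegative node weights such that w(T_v) > 0. Then the sum, over all edges e = (c, p(c)) in the symmetric difference between the solid edge sets of the proper heavy path decomposition and of the v-exposed heavy path decomposition, of the quantity 1 + log₂( w(T_{p(c)}) / w(T_c) ), is at most 4·log₂( w(T_r) / w(T_v) ) + 2. (Every such edge has w(T_c) > 0, so each term is defined and nonnegative.) -/
/-!
The two decompositions differ only in the light edges on the path from the root to `v`, and in the
heavy edges hanging off that path. Every edge costs a nonnegative amount, a heavy edge costs at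
most `2`, and a node has at most one heavy child, because subtrees of distinct children are
disjoint (`eq_of_heavy`). Group the differing edges by their upper endpoint.

* Below `v` itself, there is at most one such edge, the heavy child of `v`; it costs at most `2`.
* Below a proper ancestor `p` of `v`, let `x` be the child of `p` on the path and
  `L = log₂ (w(T_p) / w(T_x))`. If `x` is heavy, no edge below `p` changes. If `x` is light,
  then `L ≥ 1` and the edges that change are that of `x`, of cost `1 + L`, and possibly one heavy
  edge; in total at most `3 + L ≤ 4 * L` (`sum_siblingDiff_le`).

The bounds `4 * L` telescope along the path (`sum_diffAbove_le`).
-/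

open scoped Classical

/-- A finite rooted tree, given by a root and a parent function:
the root is its own parent, and every node reaches the root by
iterating the parent function. -/
structure ParentTree (V : Type*) [Fintype V] where
  root : V
  parent : V → V
  parent_root : parent root = root
  reaches : ∀ v : V, ∃ n : ℕ, parent^[n] v = root

namespace ParentTree

variable {V : Type*} [Fintype V]

/-- `w(T_x)`: total weight of the subtree rooted at `x`. -/
noncomputable def subtreeWeight (T : ParentTree V) (w : V → ℝ) (x : V) : ℝ :=
  ∑ y ∈ Finset.univ.filter (fun y => ∃ n : ℕ, T.parent^[n] y = x), w y

/-- The node `c` (equivalently, the edge from `c` to its parent) is *heavy*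
if `w(T_{p(c)}) < 2 · w(T_c)`; otherwise it is *light*. -/
def Heavy (T : ParentTree V) (w : V → ℝ) (c : V) : Prop :=
  T.subtreeWeight w (T.parent c) < 2 * T.subtreeWeight w c

/-- Distance from `v` to the root. -/
noncomputable def depth (T : ParentTree V) (v : V) : ℕ := Nat.find (T.reaches v)

/-- The *light depth* `ℓ(v)`: the number of light edges on the root-to-`v` path. -/
noncomputable def lightDepth (T : ParentTree V) (w : V → ℝ) (v : V) : ℕ :=
  ((Finset.range (T.depth v)).filter (fun i => ¬ T.Heavy w (T.parent^[i] v))).card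

/-- The edge from `c` to its parent is solid in the `u`-exposed heavy path
decomposition: either it lies on the root-to-`u` path, or its upper endpoint
is not on that path and the edge is heavy. -/
def ExposedSolid (T : ParentTree V) (w : V → ℝ) (u c : V) : Prop :=
  (∃ n : ℕ, T.parent^[n] u = c) ∨
    ((¬ ∃ n : ℕ, T.parent^[n] u = T.parent c) ∧ T.Heavy w c)

/-- Neighbor relation in the tree. -/
def Adj (T : ParentTree V) (u v : V) : Prop :=
  (u ≠ T.root ∧ T.parent u = v) ∨ (v ≠ T.root ∧ T.parent v = u)

/-- Degree of a node of the tree. -/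
noncomputable def degree (T : ParentTree V) (v : V) : ℕ :=
  (Finset.univ.filter (fun c => c ≠ T.root ∧ T.parent c = v)).card +
    (if v = T.root then 0 else 1)

/-- Distance between two nodes of the tree (length of a shortest walk). -/
noncomputable def tdist (T : ParentTree V) (u v : V) : ℕ :=
  sInf {m : ℕ | ∃ p : ℕ → V, p 0 = u ∧ p m = v ∧ ∀ i < m, T.Adj (p i) (p (i + 1))}

end ParentTree

/-- Induced node weight `w(v) = Σ_{x : b(x) = v} w(x)`. -/
noncomputable def inducedWeight {VG VT : Type*} [Fintype VG]
    (b : VG → VT) (wG : VG → ℝ) (v : VT) : ℝ :=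
  ∑ x ∈ Finset.univ.filter (fun x => b x = v), wG x

namespace ParentTree

variable {V : Type*} [Fintype V] (T : ParentTree V) (w : V → ℝ)

/-- The cost `1 + log₂ (w(T_{p(c)}) / w(T_c))` of the edge from `c` to its parent. If `w(T_c) = 0`,
the conventions for division and logarithm make it `1`. -/
noncomputable def cost (c : V) : ℝ :=
  1 + Real.logb 2 (T.subtreeWeight w (T.parent c) / T.subtreeWeight w c)

/-- The edges on which the proper and the `v`-exposed decompositions differ, except those whose
upper endpoint is `v`. -/
noncomputable def diffAbove (v : V) : Finset V :=
  Finset.univ.filter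
    (fun c => (c ≠ T.root ∧ ¬ (T.Heavy w c ↔ T.ExposedSolid w v c)) ∧ T.parent c ≠ v)

/-- The heavy children of `x`. -/
noncomputable def heavyChildren (x : V) : Finset V :=
  Finset.univ.filter (fun c => c ≠ T.root ∧ T.parent c = x ∧ T.Heavy w c)

variable {T w}

/-! ### Disjointness of sibling subtrees -/

lemma iterate_root (n : ℕ) : T.parent^[n] T.root = T.root :=
  Function.iterate_fixed T.parent_root n

/-- The only node on a cycle of the parent function is the root. -/
lemma eq_root_of_cycle {x : V} {k : ℕ} (h : T.parent^[k + 1] x = x) : x = T.root := by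
  obtain ⟨N, hN⟩ := T.reaches x
  have h1 : T.parent^[(k + 1) * N] x = x := by
    rw [Function.iterate_mul]
    exact Function.iterate_fixed h N
  have h2 : (k + 1) * N = k * N + N := by ring
  rw [h2, Function.iterate_add_apply, hN, iterate_root] at h1
  exact h1.symm

/-- A non-root node is not a proper ancestor of a node with the same parent. -/
lemma iterate_ne_sibling {a b : V} (hb : b ≠ T.root) (hab : T.parent a = T.parent b) (k : ℕ) :
    T.parent^[k + 1] a ≠ b := by
  intro h
  -- Going one step up from `a` to the common parent `x`, then to `b`, then to `x`: a cycle at `x`.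
  rw [Function.iterate_succ_apply] at h
  have h1 : T.parent^[k + 1] (T.parent a) = T.parent a := by
    rw [Function.iterate_succ_apply', h, hab]
  rw [eq_root_of_cycle h1, iterate_root] at h
  exact hb h.symm

lemma subtree_disjoint_aux {a b y : V} (hb : b ≠ T.root) (hab : T.parent a = T.parent b)
    (hne : a ≠ b) {m n : ℕ} (hmn : m ≤ n) (hm : T.parent^[m] y = a) (hn : T.parent^[n] y = b) :
    False := by
  obtain ⟨k, rfl⟩ := Nat.exists_eq_add_of_le' hmn
  rw [Function.iterate_add_apply, hm] at hn
  cases k with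
  | zero => exact hne hn
  | succ k => exact iterate_ne_sibling hb hab k hn

/-! ### Weights, heavy children and edge costs -/

lemma subtreeWeight_nonneg (hw : ∀ x, 0 ≤ w x) (x : V) : 0 ≤ T.subtreeWeight w x :=
  Finset.sum_nonneg fun y _ => hw y

lemma subtreeWeight_le_parent (hw : ∀ x, 0 ≤ w x) (x : V) :
    T.subtreeWeight w x ≤ T.subtreeWeight w (T.parent x) := by
  refine Finset.sum_le_sum_of_subset_of_nonneg ?_ fun y _ _ => hw y
  intro y hy
  simp only [Finset.mem_filter, Finset.mem_univ, true_and] at hy ⊢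
  obtain ⟨n, hn⟩ := hy
  exact ⟨n + 1, by rw [Function.iterate_succ_apply', hn]⟩

lemma add_subtreeWeight_le (hw : ∀ x, 0 ≤ w x) {a b : V} (ha : a ≠ T.root) (hb : b ≠ T.root)
    (hab : T.parent a = T.parent b) (hne : a ≠ b) :
    T.subtreeWeight w a + T.subtreeWeight w b ≤ T.subtreeWeight w (T.parent a) := by
  unfold subtreeWeight
  rw [← Finset.sum_union]
  · refine Finset.sum_le_sum_of_subset_of_nonneg ?_ fun y _ _ => hw y
    intro y hy
    simp only [Finset.mem_union, Finset.mem_filter, Finset.mem_univ, true_and] at hy ⊢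
    rcases hy with ⟨n, hn⟩ | ⟨n, hn⟩
    · exact ⟨n + 1, by rw [Function.iterate_succ_apply', hn]⟩
    · exact ⟨n + 1, by rw [Function.iterate_succ_apply', hn, hab]⟩
  · rw [Finset.disjoint_left]
    intro y hy hy'
    simp only [Finset.mem_filter, Finset.mem_univ, true_and] at hy hy'
    obtain ⟨m, hm⟩ := hy
    obtain ⟨n, hn⟩ := hy'
    rcases le_total m n with h | h
    · exact subtree_disjoint_aux hb hab hne h hm hn
    · exact subtree_disjoint_aux ha hab.symm hne.symm h hn hm

/-- A node has at most one heavy child. -/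
lemma eq_of_heavy (hw : ∀ x, 0 ≤ w x) {a b : V} (ha : a ≠ T.root) (hb : b ≠ T.root)
    (hab : T.parent a = T.parent b) (hHa : T.Heavy w a) (hHb : T.Heavy w b) : a = b := by
  by_contra hne
  have h := add_subtreeWeight_le hw ha hb hab hne
  unfold Heavy at hHa hHb
  rw [← hab] at hHb
  linarith

lemma logb_ratio_nonneg (hw : ∀ x, 0 ≤ w x) (c : V) :
    0 ≤ Real.logb 2 (T.subtreeWeight w (T.parent c) / T.subtreeWeight w c) := by
  rcases (subtreeWeight_nonneg (T := T) hw c).eq_or_lt with h | h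
  · simp [← h]
  · refine Real.logb_nonneg one_lt_two ?_
    rw [one_le_div h]
    exact subtreeWeight_le_parent hw c

lemma cost_nonneg (hw : ∀ x, 0 ≤ w x) (c : V) : 0 ≤ T.cost w c :=
  add_nonneg zero_le_one (logb_ratio_nonneg hw c)

lemma cost_le_two (hw : ∀ x, 0 ≤ w x) {c : V} (hc : T.Heavy w c) : T.cost w c ≤ 2 := by
  unfold Heavy at hc
  have hp := subtreeWeight_le_parent (T := T) hw c
  have hpos : 0 < T.subtreeWeight w c := by linarith
  have h : Real.logb 2 (T.subtreeWeight w (T.parent c) / T.subtreeWeight w c) ≤ 1 := by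
    rw [Real.logb_le_iff_le_rpow one_lt_two (div_pos (hpos.trans_le hp) hpos), Real.rpow_one,
      div_le_iff₀ hpos]
    exact hc.le
  unfold cost
  linarith

lemma sum_heavyChildren_le (hw : ∀ x, 0 ≤ w x) (x : V) :
    ∑ c ∈ T.heavyChildren w x, T.cost w c ≤ 2 := by
  have hcard : (T.heavyChildren w x).card ≤ 1 := by
    rw [Finset.card_le_one]
    intro a ha b hb
    simp only [heavyChildren, Finset.mem_filter, Finset.mem_univ, true_and] at ha hb
    exact eq_of_heavy hw ha.1 hb.1 (ha.2.1.trans hb.2.1.symm) ha.2.2 hb.2.2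
  have h := Finset.sum_le_card_nsmul (T.heavyChildren w x) (T.cost w) 2 fun c hc => by
    simp only [heavyChildren, Finset.mem_filter, Finset.mem_univ, true_and] at hc
    exact cost_le_two hw hc.2.2
  rw [nsmul_eq_mul] at h
  have : ((T.heavyChildren w x).card : ℝ) ≤ 1 := by exact_mod_cast hcard
  linarith

/-! ### The symmetric difference along the exposed path -/

/-- `y` is an ancestor of `v` iff it is `v` or an ancestor of the parent of `v`. -/
lemma anc_iff (v y : V) :
    (∃ n : ℕ, T.parent^[n] v = y) ↔ v = y ∨ ∃ n : ℕ, T.parent^[n] (T.parent v) = y := by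
  constructor
  · rintro ⟨n, hn⟩
    cases n with
    | zero => exact Or.inl hn
    | succ n => exact Or.inr ⟨n, hn⟩
  · rintro (h | ⟨n, hn⟩)
    · exact ⟨0, h⟩
    · exact ⟨n + 1, hn⟩

/-- If `p(c)` is on the exposed path, the decompositions differ on a light `c` exactly if it is on
the path, and on a heavy `c` exactly if it is not. -/
lemma diff_iff_of_anc_parent {v c : V} (h : ∃ n : ℕ, T.parent^[n] v = T.parent c) :
    ¬ (T.Heavy w c ↔ T.ExposedSolid w v c) ↔
      (T.Heavy w c ↔ ¬ ∃ n : ℕ, T.parent^[n] v = c) := by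
  unfold ExposedSolid
  tauto

lemma diffAbove_root : T.diffAbove w T.root = ∅ := by
  rw [diffAbove, Finset.filter_eq_empty_iff]
  rintro c - ⟨⟨hc, hd⟩, hp⟩
  apply hd
  simp only [ExposedSolid, iterate_root, exists_const, hc.symm, hp.symm, not_false_eq_true,
    true_and, false_or]

/-- The edges of the symmetric difference whose upper endpoint is the parent of `v` cost at most
four times the logarithm of the weight ratio across the edge of `v`. -/
lemma sum_siblingDiff_le (hw : ∀ x, 0 ≤ w x) {v : V} (hr : v ≠ T.root)
    (hv : 0 < T.subtreeWeight w v) :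
    ∑ c ∈ (T.diffAbove w v).filter (fun c => T.parent c = T.parent v), T.cost w c ≤
      4 * Real.logb 2 (T.subtreeWeight w (T.parent v) / T.subtreeWeight w v) := by
  have hmem : ∀ c ∈ (T.diffAbove w v).filter (fun c => T.parent c = T.parent v),
      c ≠ T.root ∧ T.parent c = T.parent v ∧ (T.Heavy w c ↔ c ≠ v) := by
    intro c hc
    simp only [diffAbove, Finset.mem_filter, Finset.mem_univ, true_and] at hc
    obtain ⟨⟨⟨hcr, hd⟩, -⟩, hp⟩ := hc
    refine ⟨hcr, hp, ?_⟩
    rw [diff_iff_of_anc_parent ⟨1, by simp [hp]⟩] at hd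
    rw [hd, not_iff_not]
    constructor
    · rintro ⟨n, hn⟩
      cases n with
      | zero => exact hn.symm
      | succ n => exact absurd hn (iterate_ne_sibling hcr hp.symm n)
    · rintro rfl
      exact ⟨0, rfl⟩
  by_cases hH : T.Heavy w v
  · rw [Finset.sum_eq_zero]
    · exact mul_nonneg (by norm_num) (logb_ratio_nonneg hw v)
    · intro c hc
      obtain ⟨hcr, hp, hi⟩ := hmem c hc
      by_cases hcv : c = v
      · subst hcv
        exact absurd rfl (hi.1 hH)
      · exact absurd (eq_of_heavy hw hcr hr hp (hi.2 hcv) hH) hcv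
  · have hsub : (T.diffAbove w v).filter (fun c => T.parent c = T.parent v) ⊆
        insert v (T.heavyChildren w (T.parent v)) := by
      intro c hc
      obtain ⟨hcr, hp, hi⟩ := hmem c hc
      rw [Finset.mem_insert]
      by_cases hcv : c = v
      · exact Or.inl hcv
      · right
        simp only [heavyChildren, Finset.mem_filter, Finset.mem_univ, true_and]
        exact ⟨hcr, hp, hi.2 hcv⟩
    have h1 := Finset.sum_le_sum_of_subset_of_nonneg hsub (f := T.cost w)
      fun c _ _ => cost_nonneg hw c
    rw [Finset.sum_insert (by simp [heavyChildren, hH])] at h1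
    have h2 := sum_heavyChildren_le (T := T) hw (T.parent v)
    unfold Heavy at hH
    have hL : 1 ≤ Real.logb 2 (T.subtreeWeight w (T.parent v) / T.subtreeWeight w v) := by
      have hp := subtreeWeight_le_parent (T := T) hw v
      rw [Real.le_logb_iff_rpow_le one_lt_two (div_pos (hv.trans_le hp) hv), Real.rpow_one,
        le_div_iff₀ hv]
      linarith
    have h3 : T.cost w v =
      1 + Real.logb 2 (T.subtreeWeight w (T.parent v) / T.subtreeWeight w v) := rfl
    linarith

/-- Away from the children of `v` and of its parent, exposing `v` and exposing its parent have the
same effect. -/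
lemma diffAbove_filter_subset (v : V) :
    (T.diffAbove w v).filter (fun c => ¬ T.parent c = T.parent v) ⊆
      T.diffAbove w (T.parent v) := by
  intro c hc
  simp only [diffAbove, Finset.mem_filter, Finset.mem_univ, true_and] at hc ⊢
  obtain ⟨⟨⟨hcr, hd⟩, hpv⟩, hp⟩ := hc
  have hvc : v ≠ c := by
    rintro rfl
    exact hp rfl
  refine ⟨⟨hcr, ?_⟩, hp⟩
  simpa only [ExposedSolid, anc_iff v c, anc_iff v (T.parent c), hvc, Ne.symm hpv, false_or]
    using hd

/-- The telescoping bound, by induction on the distance of `v` from the root. -/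
lemma sum_diffAbove_le (hw : ∀ x, 0 ≤ w x) (n : ℕ) : ∀ v : V, T.parent^[n] v = T.root →
    0 < T.subtreeWeight w v → ∑ c ∈ T.diffAbove w v, T.cost w c ≤
      4 * Real.logb 2 (T.subtreeWeight w T.root / T.subtreeWeight w v) := by
  have hroot : 0 < T.subtreeWeight w T.root → ∑ c ∈ T.diffAbove w T.root, T.cost w c ≤
      4 * Real.logb 2 (T.subtreeWeight w T.root / T.subtreeWeight w T.root) := by
    intro h
    simp [diffAbove_root, div_self h.ne']
  induction n with
  | zero =>
    rintro v rfl hv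
    exact hroot hv
  | succ n ih =>
    intro v hn hv
    by_cases hr : v = T.root
    · subst hr
      exact hroot hv
    have hpv : 0 < T.subtreeWeight w (T.parent v) :=
      hv.trans_le (subtreeWeight_le_parent hw v)
    have hrpos : 0 < T.subtreeWeight w T.root := by
      rw [← hn]
      clear ih hn
      induction n with
      | zero => exact hpv
      | succ n ih =>
        rw [Function.iterate_succ_apply']
        exact ih.trans_le (subtreeWeight_le_parent hw _)
    have h1 := ih (T.parent v) hn hpv
    have h2 := sum_siblingDiff_le hw hr hv
    have h3 := Finset.sum_le_sum_of_subset_of_nonneg (diffAbove_filter_subset (T := T) (w := w) v)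
      (f := T.cost w) fun c _ _ => cost_nonneg hw c
    rw [← Finset.sum_filter_add_sum_filter_not (T.diffAbove w v)
      (fun c => T.parent c = T.parent v)]
    rw [Real.logb_div hrpos.ne' hpv.ne'] at h1
    rw [Real.logb_div hpv.ne' hv.ne'] at h2
    rw [Real.logb_div hrpos.ne' hv.ne']
    linarith

end ParentTree

/-- For a node `v` with `w(T_v) > 0`, the sum over all edges `(c, p(c))` in the
symmetric difference between the solid edge sets of the proper and of the
`v`-exposed heavy path decompositions of `1 + log₂( w(T_{p(c)}) / w(T_c) )` is
at most `4·log₂( w(T_r) / w(T_v) ) + 2`. -/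
theorem symmDiff_cost_le {V : Type*} [Fintype V] (T : ParentTree V)
    (w : V → ℝ) (hw : ∀ x, 0 ≤ w x) (v : V) (hv : 0 < T.subtreeWeight w v) :
    ∑ c ∈ Finset.univ.filter
        (fun c => c ≠ T.root ∧ ¬ (T.Heavy w c ↔ T.ExposedSolid w v c)),
        (1 + Real.logb 2 (T.subtreeWeight w (T.parent c) / T.subtreeWeight w c)) ≤
      4 * Real.logb 2 (T.subtreeWeight w T.root / T.subtreeWeight w v) + 2 := by
  obtain ⟨n, hn⟩ := T.reaches v
  have h1 := ParentTree.sum_diffAbove_le hw n v hn hv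
  have h2 := ParentTree.sum_heavyChildren_le (T := T) hw v
  rw [← Finset.sum_filter_add_sum_filter_not _ (fun c => T.parent c = v), Finset.filter_filter,
    Finset.filter_filter, add_comm]
  refine add_le_add h1 (le_trans ?_ h2)
  refine Finset.sum_le_sum_of_subset_of_nonneg (f := T.cost w) ?_
    fun c _ _ => ParentTree.cost_nonneg hw c
  intro c hc
  simp only [ParentTree.heavyChildren, Finset.mem_filter, Finset.mem_univ, true_and] at hc ⊢
  obtain ⟨⟨hcr, hd⟩, hp⟩ := hc
  refine ⟨hcr, hp, ?_⟩
  rw [ParentTree.diff_iff_of_anc_parent ⟨0, hp.symm⟩] at hd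
  refine hd.2 ?_
  -- A child `c` of `v` that is also an ancestor of `v` would close a cycle.
  rintro ⟨k, hk⟩
  have hcyc : T.parent^[k + 1] c = c := by
    rw [Function.iterate_succ_apply, hp, hk]
  exact hcr (ParentTree.eq_root_of_cycle hcyc)
end

section
/- Let (T, 𝓑) be a rooted tree decomposition of a connected graph G with positive vertex weights, satisfying conditions (R1) with adhesion bound a_max, (R2), and (R3). Then the induced node-weight function v ↦ w(v) on T is (2·a_max + 2)-positive. -/
/-!
The key point is that a vertex `x` of a bag `𝓑 u` with `u ≠ root` and `b x ≠ u` also lies in the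
bag of the parent of `u` (`mem_parent_bag`): the tree path from `u` to `b x` cannot start
downwards, since then it would stay below `u`, while `b x` is no deeper than `u`; so it passes
through the parent, and (T2) applies.

For a leaf, (R2) supplies a vertex absent from the neighbouring bag, which must then be
introduced at the leaf. For a path of degree-2 nodes without weight, the root is not on the path
(its bag is nonempty by (R1), and everything in it is introduced there), and a non-root node of
degree 2 has a single child, so the path is monotone in depth. Each bag on it is contained in
its parent's bag, so by (R1) its size lies between `1` and `amax`, and by (R3) the sizes are
strictly monotone along the path. Hence the path has at most `amax` nodes.
-/

open scoped Classical

namespace ParentTree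

variable {V : Type*} [Fintype V]

lemma parent_ne (T : ParentTree V) {u : V} (hu : u ≠ T.root) : T.parent u ≠ u := by
  intro h
  obtain ⟨n, hn⟩ := T.reaches u
  rw [Function.iterate_fixed h] at hn
  exact hu hn

/-- The tree as a `SimpleGraph`. -/
def toGraph (T : ParentTree V) : SimpleGraph V where
  Adj := T.Adj
  symm := ⟨fun _ _ h => h.symm⟩
  loopless := ⟨fun _ h => h.elim (fun h => T.parent_ne h.1 h.2) (fun h => T.parent_ne h.1 h.2)⟩

lemma reachable_root (T : ParentTree V) (n : ℕ) :
    ∀ v, T.parent^[n] v = T.root → T.toGraph.Reachable v T.root := by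
  induction n with
  | zero => intro v h; rw [← h]; exact SimpleGraph.Reachable.refl _
  | succ n ih =>
    intro v h
    by_cases hv : v = T.root
    · rw [hv]
    · have hadj : T.toGraph.Adj v (T.parent v) := Or.inl ⟨hv, rfl⟩
      exact hadj.reachable.trans (ih _ h)

lemma reachable (T : ParentTree V) (u v : V) : T.toGraph.Reachable u v := by
  obtain ⟨n, hn⟩ := T.reaches u
  obtain ⟨k, hk⟩ := T.reaches v
  exact (T.reachable_root n u hn).trans (T.reachable_root k v hk).symm

lemma depth_eq_succ (T : ParentTree V) {u : V} (hu : u ≠ T.root) :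
    T.depth u = T.depth (T.parent u) + 1 :=
  Nat.find_comp_succ (T.reaches u) (T.reaches (T.parent u)) hu

lemma depth_root (T : ParentTree V) : T.depth T.root = 0 := by
  simp [depth]

lemma eq_root_of_depth (T : ParentTree V) {u : V} (hu : T.depth u = 0) : u = T.root := by
  by_contra h
  have := T.depth_eq_succ h
  omega

lemma depth_iterate_le (T : ParentTree V) (n : ℕ) (y : V) :
    T.depth (T.parent^[n] y) ≤ T.depth y := by
  induction n generalizing y with
  | zero => exact le_rfl
  | succ n ih =>
    refine (ih (T.parent y)).trans ?_
    by_cases hy : y = T.root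
    · rw [hy, T.parent_root]
    · have := T.depth_eq_succ hy
      omega

/-- A simple path from `u` to a different node that is at most as deep visits the parent of `u`
right after `u`: a path starting with a child of `u` stays among the descendants of that child. -/
lemma path_second (T : ParentTree V) {u v : V} (huv : v ≠ u) (hd : T.depth v ≤ T.depth u)
    {m : ℕ} {p : ℕ → V} (h0 : p 0 = u) (hm : p m = v)
    (hadj : ∀ i, i < m → T.Adj (p i) (p (i + 1)))
    (hinj : ∀ i j, i ≤ m → j ≤ m → p i = p j → i = j) :
    0 < m ∧ p 1 = T.parent u := by
  have hm0 : 0 < m := by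
    rcases Nat.eq_zero_or_pos m with h | h
    · subst h; exact absurd (hm.symm.trans h0) huv
    · exact h
  refine ⟨hm0, ?_⟩
  rcases hadj 0 hm0 with h | h
  · rw [← h0]; exact h.2.symm
  · exfalso
    obtain ⟨hr, hp⟩ := h
    simp only [zero_add] at hr hp
    have key : ∀ i, i < m → ∃ n, T.parent^[n] (p (i + 1)) = p 1 := by
      intro i
      induction i with
      | zero => intro _; exact ⟨0, rfl⟩
      | succ i ih =>
        intro hi
        obtain ⟨n, hn⟩ := ih (by omega)
        rcases hadj (i + 1) hi with h | h
        · cases n with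
          | zero =>
            -- A step up from the child itself would return to `u`.
            have h1 : p (i + 1) = p 1 := hn
            have h2 : p (i + 1 + 1) = p 0 := by rw [← h.2, h1, hp]
            have := hinj _ _ (by omega) (by omega) h2
            omega
          | succ n => exact ⟨n, by rw [← h.2]; exact hn⟩
        · exact ⟨n + 1, by rw [Function.iterate_succ_apply, h.2]; exact hn⟩
    obtain ⟨n, hn⟩ := key (m - 1) (by omega)
    rw [Nat.sub_add_cancel hm0, hm] at hn
    have h1 := T.depth_iterate_le n v
    rw [hn, T.depth_eq_succ hr, hp, h0] at h1
    omega

lemma exists_adj (T : ParentTree V) {u : V} (h : T.degree u ≠ 0) : ∃ v, T.Adj u v := by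
  by_cases hu : u = T.root
  · rw [degree, if_pos hu, add_zero] at h
    obtain ⟨c, hc⟩ := Finset.card_ne_zero.mp h
    exact ⟨c, Or.inr (Finset.mem_filter.mp hc).2⟩
  · exact ⟨T.parent u, Or.inl ⟨hu, rfl⟩⟩

lemma child_unique (T : ParentTree V) {u c d : V} (h : T.degree u = 2) (hu : u ≠ T.root)
    (hc : c ≠ T.root) (hcu : T.parent c = u) (hd : d ≠ T.root) (hdu : T.parent d = u) :
    c = d := by
  rw [degree, if_neg hu] at h
  have h1 : (Finset.univ.filter (fun c => c ≠ T.root ∧ T.parent c = u)).card ≤ 1 := by omega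
  exact Finset.card_le_one.mp h1 c (by simp [hc, hcu]) d (by simp [hd, hdu])

/-- A path of non-root nodes of degree 2 goes either up all the way or down all the way. -/
lemma path_monotone (T : ParentTree V) {m : ℕ} {p : ℕ → V}
    (hadj : ∀ i, i + 1 < m → T.Adj (p i) (p (i + 1)))
    (hinj : ∀ i j, i < m → j < m → p i = p j → i = j)
    (hdeg : ∀ i, i < m → T.degree (p i) = 2) (hroot : ∀ i, i < m → p i ≠ T.root) :
    (∀ i, i + 1 < m → T.parent (p i) = p (i + 1)) ∨
      (∀ i, i + 1 < m → T.parent (p (i + 1)) = p i) := by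
  by_cases hm : 1 < m
  · rcases hadj 0 hm with h | h
    · left
      intro i
      induction i with
      | zero => intro _; exact h.2
      | succ i ih =>
        intro hi
        rcases hadj (i + 1) hi with h' | h'
        · exact h'.2
        · have := T.child_unique (hdeg (i + 1) (by omega)) (hroot _ (by omega))
            (hroot i (by omega)) (ih (by omega)) h'.1 h'.2
          have := hinj _ _ (by omega) (by omega) this
          omega
    · right
      intro i
      induction i with
      | zero => intro _; exact h.2
      | succ i ih =>
        intro hi
        rcases hadj (i + 1) hi with h' | h'
        · have := hinj _ _ (by omega) (by omega) ((ih (by omega)).symm.trans h'.2)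
          omega
        · exact h'.2
  · exact Or.inl fun i hi => by omega

/-- A vertex of a non-root bag that is not introduced there also lies in the parent's bag. -/
lemma mem_parent_bag {VG : Type*} (T : ParentTree V) (𝓑 : V → Set VG)
    (hT2 : ∀ (m : ℕ) (p : ℕ → V),
      (∀ i, i < m → T.Adj (p i) (p (i + 1))) →
      (∀ i j, i ≤ m → j ≤ m → p i = p j → i = j) →
      ∀ i, i ≤ m → 𝓑 (p 0) ∩ 𝓑 (p m) ⊆ 𝓑 (p i))
    {b : VG → V}
    (hb : ∀ x : VG, x ∈ 𝓑 (b x) ∧ ∀ u : V, x ∈ 𝓑 u → T.depth (b x) ≤ T.depth u)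
    {u : V} {x : VG} (hx : x ∈ 𝓑 u) (hbx : b x ≠ u) : x ∈ 𝓑 (T.parent u) := by
  obtain ⟨w, hw⟩ := (T.reachable u (b x)).exists_isPath
  have hadj : ∀ i, i < w.length → T.Adj (w.getVert i) (w.getVert (i + 1)) :=
    fun i hi => w.adj_getVert_succ hi
  have hinj : ∀ i j, i ≤ w.length → j ≤ w.length → w.getVert i = w.getVert j → i = j :=
    fun i j hi hj h => hw.getVert_injOn hi hj h
  obtain ⟨hpos, h1⟩ := T.path_second hbx ((hb x).2 u hx) w.getVert_zero w.getVert_length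
    hadj hinj
  have := hT2 w.length w.getVert hadj hinj 1 hpos
  rw [h1, w.getVert_zero, w.getVert_length] at this
  exact this ⟨hx, (hb x).1⟩

end ParentTree

lemma inducedWeight_pos {VG VT : Type*} [Fintype VG] {b : VG → VT} {wG : VG → ℝ}
    (hwG : ∀ x, 0 < wG x) {x : VG} {v : VT} (h : b x = v) : 0 < inducedWeight b wG v :=
  Finset.sum_pos (fun y _ => hwG y) ⟨x, by simp [h]⟩

/-- In a rooted tree decomposition `(T, 𝓑)` of a connected graph `G` with
positive vertex weights, satisfying conditions (R1) (bounded adhesion `amax`),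
(R2) and (R3), the induced node-weight function is `(2·amax + 2)`-positive:
every node of degree 1 has positive weight, and every path of at least
`2·amax + 2` nodes of degree 2 contains a node of positive weight. -/
theorem inducedWeight_kPositive {VG VT : Type*} [Fintype VG] [Fintype VT]
    (G : SimpleGraph VG) (hG : G.Connected)
    (T : ParentTree VT) (𝓑 : VT → Set VG)
    (hT1 : ∀ x : VG, ∃ u : VT, x ∈ 𝓑 u)
    (hT2 : ∀ (m : ℕ) (p : ℕ → VT),
      (∀ i, i < m → T.Adj (p i) (p (i + 1))) →
      (∀ i j, i ≤ m → j ≤ m → p i = p j → i = j) →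
      ∀ i, i ≤ m → 𝓑 (p 0) ∩ 𝓑 (p m) ⊆ 𝓑 (p i))
    (hT3 : ∀ x y : VG, G.Adj x y → ∃ u : VT, x ∈ 𝓑 u ∧ y ∈ 𝓑 u)
    (amax : ℕ)
    (hR1 : ∀ u v : VT, T.Adj u v →
      1 ≤ (𝓑 u ∩ 𝓑 v).ncard ∧ (𝓑 u ∩ 𝓑 v).ncard ≤ amax)
    (hR2 : ∀ u v : VT, T.degree u = 1 → T.Adj u v → (𝓑 u \ 𝓑 v).Nonempty)
    (hR3 : ∀ u v : VT, T.Adj u v → T.degree u = 2 → T.degree v = 2 → 𝓑 u ≠ 𝓑 v)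
    (wG : VG → ℝ) (hwG : ∀ x, 0 < wG x)
    (b : VG → VT)
    (hb : ∀ x : VG, x ∈ 𝓑 (b x) ∧ ∀ u : VT, x ∈ 𝓑 u → T.depth (b x) ≤ T.depth u) :
    (∀ u : VT, T.degree u = 1 → 0 < inducedWeight b wG u) ∧
    (∀ m : ℕ, 2 * amax + 2 ≤ m → ∀ p : ℕ → VT,
      (∀ i, i + 1 < m → T.Adj (p i) (p (i + 1))) →
      (∀ i j, i < m → j < m → p i = p j → i = j) →
      (∀ i, i < m → T.degree (p i) = 2) →
      ∃ i, i < m ∧ 0 < inducedWeight b wG (p i)) := by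
  have hbroot : ∀ x, x ∈ 𝓑 T.root → b x = T.root := fun x hx =>
    T.eq_root_of_depth (by have := (hb x).2 _ hx; rw [T.depth_root] at this; omega)
  refine ⟨fun u hu => ?_, fun m hm p hadj hinj hdeg => ?_⟩
  · by_cases hr : u = T.root
    · obtain ⟨v, hv⟩ := T.exists_adj (u := u) (by omega)
      obtain ⟨x, hx, -⟩ := hR2 u v hu hv
      exact inducedWeight_pos hwG ((hbroot x (hr ▸ hx)).trans hr.symm)
    · obtain ⟨x, hx, hx'⟩ := hR2 u (T.parent u) hu (Or.inl ⟨hr, rfl⟩)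
      exact inducedWeight_pos hwG
        (by_contra fun h => hx' (T.mem_parent_bag 𝓑 hT2 hb hx h))
  · by_contra! hcon
    have hb' : ∀ i, i < m → ∀ x, b x ≠ p i := fun i hi x h =>
      (hcon i hi).not_gt (inducedWeight_pos hwG h)
    have hroot : ∀ i, i < m → p i ≠ T.root := by
      intro i hi hr
      obtain ⟨v, hv⟩ := T.exists_adj (u := p i) (by rw [hdeg i hi]; omega)
      obtain ⟨x, hx, -⟩ := Set.nonempty_of_ncard_ne_zero
        (Nat.one_le_iff_ne_zero.mp (hR1 _ _ hv).1)
      exact hb' i hi x ((hbroot x (hr ▸ hx)).trans hr.symm)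
    have hsub : ∀ i, i < m → 𝓑 (p i) ⊆ 𝓑 (T.parent (p i)) := fun i hi x hx =>
      T.mem_parent_bag 𝓑 hT2 hb hx (hb' i hi x)
    have hcard : ∀ i, i < m → 1 ≤ (𝓑 (p i)).ncard ∧ (𝓑 (p i)).ncard ≤ amax := by
      intro i hi
      have := hR1 (p i) (T.parent (p i)) (Or.inl ⟨hroot i hi, rfl⟩)
      rwa [Set.inter_eq_left.mpr (hsub i hi)] at this
    rcases T.path_monotone hadj hinj hdeg hroot with hup | hdown
    · have hgrow : ∀ i, i < m → i + 1 ≤ (𝓑 (p i)).ncard := by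
        intro i
        induction i with
        | zero => intro hi; exact (hcard 0 hi).1
        | succ i ih =>
          intro hi
          have hlt : (𝓑 (p i)).ncard < (𝓑 (p (i + 1))).ncard :=
            Set.ncard_lt_ncard (((hup i hi) ▸ hsub i (by omega)).ssubset_of_ne
              (hR3 _ _ (hadj i hi) (hdeg _ (by omega)) (hdeg _ hi))) (Set.toFinite _)
          have := ih (by omega)
          omega
      have h1 := hgrow (m - 1) (by omega)
      have h2 := (hcard (m - 1) (by omega)).2
      omega
    · have hshrink : ∀ i, i < m → (𝓑 (p i)).ncard + i ≤ amax := by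
        intro i
        induction i with
        | zero => intro hi; exact (hcard 0 hi).2
        | succ i ih =>
          intro hi
          have hlt : (𝓑 (p (i + 1))).ncard < (𝓑 (p i)).ncard :=
            Set.ncard_lt_ncard (((hdown i hi) ▸ hsub (i + 1) hi).ssubset_of_ne
              (hR3 _ _ (hadj i hi) (hdeg _ (by omega)) (hdeg _ hi)).symm) (Set.toFinite _)
          have := ih (by omega)
          omega
      have := hshrink (m - 1) (by omega)
      omega
end
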